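/- Theorem 5.1(ii): Suppose the kernel k is homogeneous of degree β−1 for some β∈(0,2) with β≠1 and k(1,·)∈L^{1+ε}((0,1)) for some ε>0, and that x↦Φ̂(−x) is completely monotone on (0,∞). Let δ∈(β,2] with δ≠1 and ρ₀∈[−1,1], and set ψ_{δ,ρ₀}(p):=|p|^δ(1−iρ₀·sign(p)·tan(πδ/2)) for p∈ℝ. Let A be a nonnegative random variable with E[e^{−λA}]=Φ̂(−λ) for all λ>0, and let (Y_t)_{t≥0} be a jointly measurable real-valued stochastic process, independent of A, with E[e^{ipY_t}]=e^{−t^{β}ψ_{δ,ρ₀}(p)} for all t≥0 and p∈ℝ. Then E[e^{ip·A^{1/δ}Y_t}] = Φ̂(−t^β ψ_{δ,ρ₀}(p)) for all p∈ℝ and t≥0, and the process (A^{1/δ}Y_t)_{t≥0} provides a stochastic solution to the one-dimensional evolution equation u(t,x)=u₀(x)+∫_0^t k(t,s) L_{δ,ρ₀}u(s,x) ds, where L_{δ,ρ₀} is the Fourier multiplier operator with symbol −ψ_{δ,ρ₀}. -/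

import Mathlib

open MeasureTheory Filter

noncomputable section

noncomputable def FT1 (f : ℝ → ℂ) (p : ℝ) : ℂ :=
  (((2 * Real.pi) ^ (-(1 : ℝ) / 2) : ℝ) : ℂ) *
    ∫ x : ℝ, Complex.exp (-Complex.I * ((p * x : ℝ) : ℂ)) * f x

noncomputable def FTinv1 (f : ℝ → ℂ) (x : ℝ) : ℂ :=
  (((2 * Real.pi) ^ (-(1 : ℝ) / 2) : ℝ) : ℂ) *
    ∫ p : ℝ, Complex.exp (Complex.I * ((p * x : ℝ) : ℂ)) * f p

noncomputable def Lop1 (ψ : ℝ → ℂ) (v : ℝ → ℂ) : ℝ → ℂ :=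
  FTinv1 fun p => -ψ p * FT1 v p

noncomputable def charFn1 {Ω : Type*} [MeasurableSpace Ω] (P : Measure Ω)
    (X : Ω → ℝ) (p : ℝ) : ℂ :=
  ∫ ω, Complex.exp (Complex.I * ((p * X ω : ℝ) : ℂ)) ∂P

def ProvidesSol1 {Ω : Type*} [MeasurableSpace Ω] (P : Measure Ω)
    (X : ℝ → Ω → ℝ) (k : ℝ → ℝ → ℝ) (ψ : ℝ → ℂ) : Prop :=
  ∀ u₀ : SchwartzMap ℝ ℂ,
    (∀ s : ℝ, 0 ≤ s →
      MeasureTheory.Integrable (fun p => ψ p * FT1 (fun y => ∫ ω, u₀ (y + X s ω) ∂P) p)) ∧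
    (∀ t : ℝ, 0 < t → ∀ x : ℝ,
      (∫ ω, u₀ (x + X t ω) ∂P) =
        u₀ x + ∫ s in Set.Ioc (0:ℝ) t,
          (k t s : ℂ) * Lop1 ψ (fun y => ∫ ω, u₀ (y + X s ω) ∂P) x) ∧
    (∀ x : ℝ,
      Filter.Tendsto (fun t : ℝ => ∫ ω, u₀ (x + X t ω) ∂P)
        (nhdsWithin 0 (Set.Ioi 0)) (nhds (u₀ x)))

noncomputable def coeff (k : ℝ → ℝ → ℝ) : ℕ → ℝ → ℝ
  | 0, _ => 1
  | n + 1, t => if 0 < t then ∫ s in Set.Ioc (0:ℝ) t, k t s * coeff k n s else 0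

noncomputable def Phi (k : ℝ → ℝ → ℝ) (t : ℝ) (l : ℂ) : ℂ :=
  ∑' n : ℕ, (coeff k n t : ℂ) * l ^ n

noncomputable def PhiR (k : ℝ → ℝ → ℝ) (t : ℝ) (x : ℝ) : ℝ :=
  ∑' n : ℕ, coeff k n t * x ^ n

noncomputable def chat (k : ℝ → ℝ → ℝ) (β : ℝ) : ℕ → ℝ
  | 0 => 1
  | n + 1 => chat k β n * ∫ s in Set.Ioc (0:ℝ) 1, k 1 s * s ^ (β * (n : ℝ))

noncomputable def PhiHatC (k : ℝ → ℝ → ℝ) (β : ℝ) (z : ℂ) : ℂ :=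
  ∑' n : ℕ, (chat k β n : ℂ) * z ^ n

noncomputable def PhiHatR (k : ℝ → ℝ → ℝ) (β : ℝ) (x : ℝ) : ℝ :=
  ∑' n : ℕ, chat k β n * x ^ n

def CMon (f : ℝ → ℝ) : Prop :=
  ContDiffOn ℝ (⊤ : ℕ∞) f (Set.Ioi 0) ∧
  ∀ (n : ℕ), ∀ x ∈ Set.Ioi (0:ℝ),
    0 ≤ (-1 : ℝ) ^ n * iteratedDerivWithin n f (Set.Ioi 0) x

noncomputable def psiStable (δ ρ : ℝ) (p : ℝ) : ℂ :=
  ((|p| ^ δ : ℝ) : ℂ) *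
    (1 - Complex.I * (ρ : ℂ) * ((Real.sign p : ℝ) : ℂ) *
      ((Real.tan (Real.pi * δ / 2) : ℝ) : ℂ))

lemma aux_k1_int (k : ℝ → ℝ → ℝ) (hkm : Measurable (Function.uncurry k)) (ε : ℝ) (hε : 0 < ε)
    (hkL : MeasureTheory.IntegrableOn (fun s => |k 1 s| ^ (1 + ε)) (Set.Ioo 0 1)) :
    IntegrableOn (k 1) (Set.Ioc 0 1) := by
  rw [integrableOn_Ioc_iff_integrableOn_Ioo]
  have h1 : Measurable (k 1) := hkm.comp measurable_prodMk_left
  have hc : IntegrableOn (fun _ : ℝ => (1:ℝ)) (Set.Ioo (0:ℝ) 1) := by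
    simp
  refine Integrable.mono' (hc.add hkL) h1.aestronglyMeasurable (Eventually.of_forall fun s => ?_)
  simp only [Pi.add_apply, Real.norm_eq_abs]
  rcases le_total (|k 1 s|) 1 with h | h
  · have := Real.rpow_nonneg (abs_nonneg (k 1 s)) (1 + ε)
    linarith
  · have := Real.rpow_le_rpow_of_exponent_le h (show (1:ℝ) ≤ 1 + ε by linarith)
    rw [Real.rpow_one] at this
    linarith

lemma aux_a_tendsto (k : ℝ → ℝ → ℝ) (β : ℝ) (hβ0 : 0 < β)
    (hk : IntegrableOn (k 1) (Set.Ioc 0 1)) :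
    Tendsto (fun n : ℕ => ∫ s in Set.Ioc (0:ℝ) 1, k 1 s * s ^ (β * (n : ℝ))) atTop (nhds 0) := by
  suffices key : Tendsto (fun n : ℕ => ∫ s in Set.Ioc (0:ℝ) 1, k 1 s * s ^ (β * (n : ℝ))) atTop
      (nhds (∫ s in Set.Ioc (0:ℝ) 1, (0:ℝ))) by
    rwa [integral_zero] at key
  refine tendsto_integral_of_dominated_convergence (fun s => ‖k 1 s‖) ?_ hk.norm ?_ ?_
  · intro n
    exact hk.aestronglyMeasurable.mul (by fun_prop)
  · intro n
    refine (ae_restrict_iff' measurableSet_Ioc).2 (Eventually.of_forall fun s hs => ?_)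
    rw [norm_mul]
    refine mul_le_of_le_one_right (norm_nonneg _) ?_
    rw [Real.norm_eq_abs, abs_of_nonneg (Real.rpow_nonneg hs.1.le _)]
    exact Real.rpow_le_one hs.1.le hs.2 (by positivity)
  · rw [← restrict_Ioo_eq_restrict_Ioc]
    refine (ae_restrict_iff' measurableSet_Ioo).2 (Eventually.of_forall fun s hs => ?_)
    have h1 : s ^ β < 1 := Real.rpow_lt_one hs.1.le hs.2 hβ0
    have h2 := tendsto_pow_atTop_nhds_zero_of_lt_one (Real.rpow_nonneg hs.1.le β) h1
    have h3 := h2.const_mul (k 1 s)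
    rw [mul_zero] at h3
    refine h3.congr fun n => ?_
    rw [Real.rpow_mul hs.1.le, Real.rpow_natCast]

lemma aux_summable (k : ℝ → ℝ → ℝ) (β : ℝ) (hβ0 : 0 < β)
    (hk : IntegrableOn (k 1) (Set.Ioc 0 1)) (r : ℝ) (hr : 0 ≤ r) :
    Summable (fun n => |chat k β n| * r ^ n) := by
  have h := ((aux_a_tendsto k β hβ0 hk).abs).mul_const r
  simp only [abs_zero, zero_mul] at h
  refine summable_of_ratio_norm_eventually_le (r := 1/2) (by norm_num) ?_
  filter_upwards [h.eventually (gt_mem_nhds (show (0:ℝ) < 1/2 by norm_num))] with n hn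
  rw [chat, abs_mul, pow_succ]
  simp only [norm_mul, norm_pow, Real.norm_eq_abs, abs_abs, abs_of_nonneg hr]
  have h2 : 0 ≤ |chat k β n| * r ^ n := by positivity
  nlinarith

lemma aux_summableC (k : ℝ → ℝ → ℝ) (β : ℝ) (hβ0 : 0 < β)
    (hk : IntegrableOn (k 1) (Set.Ioc 0 1)) (z : ℂ) :
    Summable (fun n => (chat k β n : ℂ) * z ^ n) := by
  refine Summable.of_norm ((aux_summable k β hβ0 hk ‖z‖ (norm_nonneg _)).congr fun n => ?_)
  simp

lemma aux_diff (k : ℝ → ℝ → ℝ) (β : ℝ) (hβ0 : 0 < β)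
    (hk : IntegrableOn (k 1) (Set.Ioc 0 1)) : Differentiable ℂ (PhiHatC k β) := by
  intro z
  have hR : z ∈ Metric.ball (0:ℂ) (‖z‖ + 1) := by simp
  have h : DifferentiableOn ℂ (fun w : ℂ => ∑' n : ℕ, (chat k β n : ℂ) * w ^ n)
      (Metric.ball (0:ℂ) (‖z‖ + 1)) := by
    refine Complex.differentiableOn_tsum_of_summable_norm
      (aux_summable k β hβ0 hk (‖z‖ + 1) (by positivity)) (fun n => by fun_prop)
      Metric.isOpen_ball ?_
    intro n w hw
    simp only [Metric.mem_ball, dist_zero_right] at hw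
    simp only [norm_mul, norm_pow, Complex.norm_real, Real.norm_eq_abs]
    gcongr
  exact h.differentiableAt (Metric.isOpen_ball.mem_nhds hR)

lemma aux_real (k : ℝ → ℝ → ℝ) (β x : ℝ) : PhiHatC k β (x : ℂ) = (PhiHatR k β x : ℂ) := by
  unfold PhiHatC PhiHatR
  push_cast
  rfl

lemma aux_zero (k : ℝ → ℝ → ℝ) (β : ℝ) : PhiHatC k β 0 = 1 := by
  unfold PhiHatC
  rw [tsum_eq_single 0]
  · simp [chat]
  · intro n hn
    simp [hn]

lemma aux_laplace (k : ℝ → ℝ → ℝ) (β : ℝ) (hβ0 : 0 < β)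
    (hk : IntegrableOn (k 1) (Set.Ioc 0 1))
    {Ω : Type*} [MeasurableSpace Ω] (P : Measure Ω) [IsProbabilityMeasure P]
    (A : Ω → ℝ) (hAm : Measurable A) (hA0 : ∀ ω, 0 ≤ A ω)
    (hALap : ∀ l : ℝ, 0 < l → (∫ ω, Real.exp (-(l * A ω)) ∂P) = PhiHatR k β (-l))
    (z : ℂ) (hz : z.re < 0) :
    (∫ ω, Complex.exp (z * A ω) ∂P) = PhiHatC k β z := by
  have hsub : Set.Iio (0:ℝ) ⊆ interior (ProbabilityTheory.integrableExpSet A P) := by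
    refine interior_maximal ?_ isOpen_Iio
    intro t ht
    have ht' : t < 0 := ht
    refine Integrable.of_bound (C := 1) (by fun_prop) (Eventually.of_forall fun ω => ?_)
    rw [Real.norm_eq_abs, Real.abs_exp, Real.exp_le_one_iff]
    exact mul_nonpos_of_nonpos_of_nonneg ht'.le (hA0 ω)
  have h1 : AnalyticOnNhd ℂ (ProbabilityTheory.complexMGF A P) {z : ℂ | z.re < 0} :=
    ProbabilityTheory.analyticOnNhd_complexMGF.mono fun w hw => hsub hw
  have h2 : AnalyticOnNhd ℂ (PhiHatC k β) {z : ℂ | z.re < 0} :=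
    fun w _ => (aux_diff k β hβ0 hk).analyticAt w
  have hpre : IsPreconnected {z : ℂ | z.re < 0} := (convex_halfSpace_re_lt 0).isPreconnected
  have h3 := AnalyticOnNhd.eqOn_of_preconnected_of_frequently_eq h1 h2 hpre
    (z₀ := ((-1 : ℝ) : ℂ)) (by simp) ?_
  · exact h3 hz
  have hev : ∃ᶠ x : ℝ in nhdsWithin (-1) {-1}ᶜ,
      ProbabilityTheory.complexMGF A P (x : ℂ) = PhiHatC k β (x : ℂ) := by
    refine Eventually.frequently ?_
    filter_upwards [mem_nhdsWithin_of_mem_nhds (gt_mem_nhds (show (-1:ℝ) < 0 by norm_num))]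
      with x hx
    rw [ProbabilityTheory.complexMGF_ofReal, aux_real]
    have := hALap (-x) (by linarith)
    simp only [neg_mul, neg_neg] at this
    rw [← this]
    rfl
  refine Tendsto.frequently ?_ hev
  refine tendsto_nhdsWithin_iff.2 ⟨?_, ?_⟩
  · exact (Complex.continuous_ofReal.tendsto (-1)).mono_left nhdsWithin_le_nhds
  · filter_upwards [self_mem_nhdsWithin] with x hx
    simpa only [Set.mem_compl_iff, Set.mem_singleton_iff, Complex.ofReal_inj] using hx

lemma aux_psi_scale (δ ρ : ℝ) (hδ : 0 < δ) (p a : ℝ) (ha : 0 ≤ a) :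
    psiStable δ ρ (p * a ^ (1 / δ)) = (a : ℂ) * psiStable δ ρ p := by
  rcases ha.eq_or_lt with rfl | ha
  · simp [psiStable, Real.zero_rpow hδ.ne', Real.zero_rpow (inv_ne_zero hδ.ne')]
  · have hp : 0 < a ^ (1 / δ) := Real.rpow_pos_of_pos ha _
    unfold psiStable
    have h1 : Real.sign (p * a ^ (1 / δ)) = Real.sign p := by
      rcases lt_trichotomy p 0 with h | h | h
      · rw [Real.sign_of_neg h, Real.sign_of_neg (mul_neg_of_neg_of_pos h hp)]
      · simp [h]
      · rw [Real.sign_of_pos h, Real.sign_of_pos (mul_pos h hp)]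
    have h2 : |p * a ^ (1 / δ)| ^ δ = a * |p| ^ δ := by
      rw [abs_mul, abs_of_pos hp, Real.mul_rpow (abs_nonneg _) hp.le, ← Real.rpow_mul ha.le,
        one_div_mul_cancel hδ.ne', Real.rpow_one, mul_comm]
    rw [h1, h2]
    push_cast
    ring

lemma aux_psi_meas (δ ρ : ℝ) : Measurable (psiStable δ ρ) := by
  unfold psiStable
  have hs : Measurable Real.sign := by
    unfold Real.sign
    exact Measurable.ite measurableSet_Iio measurable_const
      (Measurable.ite measurableSet_Ioi measurable_const measurable_const)
  fun_prop

lemma aux_psi_re (δ ρ p : ℝ) : (psiStable δ ρ p).re = |p| ^ δ := by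
  unfold psiStable
  rw [Complex.re_ofReal_mul]
  simp [-Complex.ofReal_tan]

lemma aux_psi_bound (δ ρ : ℝ) (hδ : 0 < δ) (hδ2 : δ ≤ 2) : ∃ C : ℝ, 0 ≤ C ∧ ∀ p,
    ‖psiStable δ ρ p‖ ≤ C * (1 + |p| ^ 2) := by
  refine ⟨1 + |ρ| * |Real.tan (Real.pi * δ / 2)|, by positivity, fun p => ?_⟩
  unfold psiStable
  rw [norm_mul, mul_comm]
  have hs : |Real.sign p| ≤ 1 := by
    rcases Real.sign_apply_eq p with h | h | h <;> simp [h]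
  gcongr
  · refine (norm_sub_le _ _).trans ?_
    simp only [norm_mul, norm_one, Complex.norm_I, Complex.norm_real, Real.norm_eq_abs, one_mul]
    gcongr
    exact mul_le_of_le_one_right (abs_nonneg _) hs
  · rw [Complex.norm_real, Real.norm_eq_abs, abs_of_nonneg (by positivity)]
    rcases le_total (|p|) 1 with h | h
    · have := Real.rpow_le_one (abs_nonneg p) h hδ.le
      nlinarith [abs_nonneg p]
    · have := Real.rpow_le_rpow_of_exponent_le h hδ2
      rw [Real.rpow_two] at this
      linarith

lemma aux_char (k : ℝ → ℝ → ℝ) (β : ℝ) (hβ0 : 0 < β)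
    (hk : IntegrableOn (k 1) (Set.Ioc 0 1))
    (δ ρ : ℝ) (hδ : 0 < δ)
    {Ω : Type*} [MeasurableSpace Ω] (P : Measure Ω) [IsProbabilityMeasure P]
    (A : Ω → ℝ) (hAm : Measurable A) (hA0 : ∀ ω, 0 ≤ A ω)
    (hALap : ∀ l : ℝ, 0 < l → (∫ ω, Real.exp (-(l * A ω)) ∂P) = PhiHatR k β (-l))
    (Y : Ω → ℝ) (hYm : Measurable Y) (c : ℝ) (hc : 0 ≤ c)
    (hY : ∀ p : ℝ, charFn1 P Y p = Complex.exp (-(c : ℂ) * psiStable δ ρ p))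
    (hInd : ProbabilityTheory.IndepFun A Y P) (p : ℝ) :
    charFn1 P (fun ω => A ω ^ (1 / δ) * Y ω) p = PhiHatC k β (-(c : ℂ) * psiStable δ ρ p) := by
  have hmap := (ProbabilityTheory.indepFun_iff_map_prod_eq_prod_map_map hAm.aemeasurable
    hYm.aemeasurable).1 hInd
  have hPA : IsProbabilityMeasure (P.map A) := Measure.isProbabilityMeasure_map hAm.aemeasurable
  have hPY : IsProbabilityMeasure (P.map Y) := Measure.isProbabilityMeasure_map hYm.aemeasurable
  have hfm : Measurable (fun q : ℝ × ℝ =>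
      Complex.exp (Complex.I * ((p * (q.1 ^ (1 / δ) * q.2) : ℝ) : ℂ))) := by fun_prop
  have e1 : charFn1 P (fun ω => A ω ^ (1 / δ) * Y ω) p =
      ∫ ω, Complex.exp (-(c : ℂ) * psiStable δ ρ p * A ω) ∂P := by
    unfold charFn1
    rw [← integral_map (φ := fun ω => (A ω, Y ω))
      (f := fun q : ℝ × ℝ => Complex.exp (Complex.I * ((p * (q.1 ^ (1 / δ) * q.2) : ℝ) : ℂ)))
      (by fun_prop) hfm.aestronglyMeasurable, hmap, integral_prod, integral_map hAm.aemeasurable]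
    · refine integral_congr_ae (Eventually.of_forall fun ω => ?_)
      simp only
      rw [integral_map hYm.aemeasurable (by fun_prop)]
      have := hY (p * A ω ^ (1 / δ))
      rw [aux_psi_scale δ ρ hδ p (A ω) (hA0 ω)] at this
      unfold charFn1 at this
      simp only [mul_assoc] at this ⊢
      rw [this]
      congr 1
      ring
    · exact (hfm.stronglyMeasurable.integral_prod_right').aestronglyMeasurable
    · refine Integrable.of_bound (C := 1) hfm.aestronglyMeasurable (Eventually.of_forall fun q => ?_)
      rw [mul_comm, Complex.norm_exp_ofReal_mul_I]
  rw [e1]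
  have hre : (-(c : ℂ) * psiStable δ ρ p).re = -(c * |p| ^ δ) := by
    rw [← Complex.ofReal_neg, Complex.re_ofReal_mul, aux_psi_re, neg_mul]
  have h0 : 0 ≤ |p| ^ δ := by positivity
  by_cases hlt : (-(c : ℂ) * psiStable δ ρ p).re < 0
  · exact aux_laplace k β hβ0 hk P A hAm hA0 hALap _ hlt
  · rw [hre] at hlt
    have hz : c * |p| ^ δ = 0 := le_antisymm (by linarith) (by positivity)
    have : -(c : ℂ) * psiStable δ ρ p = 0 := by
      unfold psiStable
      have hz' : (c : ℂ) * ((|p| ^ δ : ℝ) : ℂ) = 0 := by exact_mod_cast hz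
      rw [← mul_assoc, neg_mul, hz', neg_zero, zero_mul]
    rw [this, aux_zero]
    simp

lemma aux_FT1_eq (u : SchwartzMap ℝ ℂ) (p : ℝ) :
    FT1 u p = (((2 * Real.pi) ^ (-(1 : ℝ) / 2) : ℝ) : ℂ) *
      (FourierTransform.fourier u : SchwartzMap ℝ ℂ) (p / (2 * Real.pi)) := by
  unfold FT1
  rw [SchwartzMap.fourier_coe, Real.fourier_real_eq_integral_exp_smul]
  congr 1
  refine integral_congr_ae (Eventually.of_forall fun x => ?_)
  simp only [smul_eq_mul]
  congr 2
  have : (Real.pi : ℂ) ≠ 0 := by exact_mod_cast Real.pi_ne_zero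
  push_cast
  field_simp

lemma aux_c_sq : (((2 * Real.pi) ^ (-(1 : ℝ) / 2) : ℝ) : ℂ) *
    (((2 * Real.pi) ^ (-(1 : ℝ) / 2) : ℝ) : ℂ) = ((2 * Real.pi : ℝ) : ℂ)⁻¹ := by
  have h : (0:ℝ) < 2 * Real.pi := by positivity
  rw [← Complex.ofReal_mul, ← Real.rpow_add h, ← Complex.ofReal_inv]
  norm_num
  rw [Real.rpow_neg_one]
  push_cast
  rw [mul_inv]
  ring

lemma aux_inv (u : SchwartzMap ℝ ℂ) (x : ℝ) : FTinv1 (FT1 u) x = u x := by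
  have h : (0:ℝ) < 2 * Real.pi := by positivity
  have h0 : FourierTransformInv.fourierInv (FourierTransform.fourier u : SchwartzMap ℝ ℂ) = u :=
    FourierTransform.fourierInv_fourier_eq u
  have h1 : u x = ∫ v : ℝ, Complex.exp (((2 * Real.pi * (v * x) : ℝ) : ℂ) * Complex.I) *
      (FourierTransform.fourier u : SchwartzMap ℝ ℂ) v := by
    conv_lhs => rw [← h0]
    rw [SchwartzMap.fourierInv_coe, Real.fourierInv_eq']
    refine integral_congr_ae (Eventually.of_forall fun v => ?_)
    simp [mul_comm]
  have h2 := Measure.integral_comp_div (fun v : ℝ =>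
    Complex.exp (((2 * Real.pi * (v * x) : ℝ) : ℂ) * Complex.I) *
      (FourierTransform.fourier u : SchwartzMap ℝ ℂ) v) (2 * Real.pi)
  rw [← h1, abs_of_pos h] at h2
  unfold FTinv1
  have h3 : ∀ p : ℝ, Complex.exp (Complex.I * ((p * x : ℝ) : ℂ)) * FT1 u p =
      (((2 * Real.pi) ^ (-(1 : ℝ) / 2) : ℝ) : ℂ) *
      (Complex.exp (((2 * Real.pi * (p / (2 * Real.pi) * x) : ℝ) : ℂ) * Complex.I) *
      (FourierTransform.fourier u : SchwartzMap ℝ ℂ) (p / (2 * Real.pi))) := by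
    intro p
    rw [aux_FT1_eq]
    have : 2 * Real.pi * (p / (2 * Real.pi) * x) = p * x := by field_simp
    rw [this, mul_comm Complex.I]
    ring
  simp_rw [h3]
  rw [integral_const_mul, h2, ← mul_assoc, aux_c_sq, Complex.real_smul, ← mul_assoc,
    inv_mul_cancel₀ (by exact_mod_cast h.ne'), one_mul]

lemma aux_FT1_cont (u : SchwartzMap ℝ ℂ) : Continuous (FT1 u) := by
  have : FT1 u = fun p => (((2 * Real.pi) ^ (-(1 : ℝ) / 2) : ℝ) : ℂ) *
      (FourierTransform.fourier u : SchwartzMap ℝ ℂ) (p / (2 * Real.pi)) :=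
    funext (aux_FT1_eq u)
  rw [this]
  have := (FourierTransform.fourier u : SchwartzMap ℝ ℂ).continuous
  fun_prop

lemma aux_FT1_pow (u : SchwartzMap ℝ ℂ) (n : ℕ) :
    Integrable (fun p => |p| ^ n * ‖FT1 u p‖) := by
  have h : (0:ℝ) < 2 * Real.pi := by positivity
  have h1 := (FourierTransform.fourier u : SchwartzMap ℝ ℂ).integrable_pow_mul volume n
  have h2 := (h1.comp_div h.ne').const_mul
    ((2 * Real.pi) ^ n * ‖(((2 * Real.pi) ^ (-(1 : ℝ) / 2) : ℝ) : ℂ)‖)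
  refine h2.congr (Eventually.of_forall fun p => ?_)
  simp only
  rw [aux_FT1_eq, norm_mul, Real.norm_eq_abs, abs_div, abs_of_pos h, div_pow]
  field_simp

lemma aux_FT1_int (u : SchwartzMap ℝ ℂ) : Integrable (FT1 u) := by
  have := aux_FT1_pow u 0
  simp only [pow_zero, one_mul] at this
  exact (integrable_norm_iff (aux_FT1_cont u).aestronglyMeasurable).1 this

lemma aux_psi_FT1_int (δ ρ : ℝ) (hδ : 0 < δ) (hδ2 : δ ≤ 2) (u : SchwartzMap ℝ ℂ) :
    Integrable (fun p => psiStable δ ρ p * FT1 u p) := by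
  obtain ⟨C, hC, hb⟩ := aux_psi_bound δ ρ hδ hδ2
  refine Integrable.mono' (((aux_FT1_pow u 0).add (aux_FT1_pow u 2)).const_mul C)
    ((aux_psi_meas δ ρ).mul (aux_FT1_cont u).measurable).aestronglyMeasurable
    (Eventually.of_forall fun p => ?_)
  rw [norm_mul]
  calc _ ≤ C * (1 + |p| ^ 2) * ‖FT1 u p‖ := by gcongr; exact hb p
    _ = _ := by simp only [Pi.add_apply]; ring

lemma aux_norm_exp (a : ℝ) : ‖Complex.exp (Complex.I * (a : ℂ))‖ = 1 := by
  rw [mul_comm, Complex.norm_exp_ofReal_mul_I]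

lemma aux_norm_exp_neg (a : ℝ) : ‖Complex.exp (-Complex.I * (a : ℂ))‖ = 1 := by
  have := aux_norm_exp (-a)
  push_cast at this
  rwa [mul_neg, ← neg_mul] at this

lemma aux_char_norm {Ω : Type*} [MeasurableSpace Ω] (P : Measure Ω) [IsProbabilityMeasure P]
    (X : Ω → ℝ) (p : ℝ) : ‖charFn1 P X p‖ ≤ 1 := by
  unfold charFn1
  have := norm_integral_le_of_norm_le_const (μ := P) (C := 1)
    (f := fun ω => Complex.exp (Complex.I * ((p * X ω : ℝ) : ℂ)))
    (Eventually.of_forall fun ω => (aux_norm_exp _).le)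
  simpa using this

lemma aux_FT1_u {Ω : Type*} [MeasurableSpace Ω] (P : Measure Ω) [IsProbabilityMeasure P]
    (X : Ω → ℝ) (hX : Measurable X) (u : SchwartzMap ℝ ℂ) (p : ℝ) :
    FT1 (fun y => ∫ ω, u (y + X ω) ∂P) p = FT1 u p * charFn1 P X p := by
  have hu : Continuous u := u.continuous
  have hm : AEStronglyMeasurable (fun q : Ω × ℝ =>
      Complex.exp (-Complex.I * ((p * q.2 : ℝ) : ℂ)) * u (q.2 + X q.1)) (P.prod volume) := by
    refine Measurable.aestronglyMeasurable ?_
    have := hu.measurable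
    fun_prop
  have hint : Integrable (fun q : Ω × ℝ =>
      Complex.exp (-Complex.I * ((p * q.2 : ℝ) : ℂ)) * u (q.2 + X q.1)) (P.prod volume) := by
    rw [integrable_prod_iff hm]
    simp only [norm_mul, aux_norm_exp_neg, one_mul]
    refine ⟨Eventually.of_forall fun ω => ?_, ?_⟩
    · have h1 : Integrable (fun x => u (x + X ω)) := u.integrable.comp_add_right (X ω)
      refine h1.norm.mono' ?_ (Eventually.of_forall fun x => ?_)
      · exact Continuous.aestronglyMeasurable (by fun_prop)
      · rw [norm_mul, aux_norm_exp_neg, one_mul]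
    · have : ∀ ω, ∫ y, ‖u (y + X ω)‖ = ∫ y, ‖u y‖ := fun ω =>
        integral_add_right_eq_self (fun y => ‖u y‖) (X ω)
      simp only [this]
      exact integrable_const _
  unfold FT1 charFn1
  rw [mul_assoc]
  congr 1
  rw [← integral_const_mul]
  simp_rw [← integral_const_mul]
  rw [← integral_integral_swap (f := fun ω y =>
    Complex.exp (-Complex.I * ((p * y : ℝ) : ℂ)) * u (y + X ω)) hint]
  refine integral_congr_ae (Eventually.of_forall fun ω => ?_)
  simp only
  rw [mul_comm, ← integral_const_mul, ← integral_add_right_eq_self (fun y =>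
    Complex.exp (Complex.I * ((p * X ω : ℝ) : ℂ)) *
      (Complex.exp (-Complex.I * ((p * y : ℝ) : ℂ)) * u y)) (X ω)]
  refine integral_congr_ae (Eventually.of_forall fun y => ?_)
  simp only
  rw [← mul_assoc, ← Complex.exp_add]
  congr 2
  push_cast
  ring

lemma aux_u_eq {Ω : Type*} [MeasurableSpace Ω] (P : Measure Ω) [IsProbabilityMeasure P]
    (X : Ω → ℝ) (hX : Measurable X) (u : SchwartzMap ℝ ℂ) (x : ℝ) :
    (∫ ω, u (x + X ω) ∂P) = FTinv1 (fun p => FT1 u p * charFn1 P X p) x := by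
  have hu : Continuous (FT1 u) := aux_FT1_cont u
  have hint : Integrable (fun q : Ω × ℝ =>
      Complex.exp (Complex.I * ((q.2 * (x + X q.1) : ℝ) : ℂ)) * FT1 u q.2) (P.prod volume) := by
    have h1 : Integrable (fun q : Ω × ℝ => (1:ℂ) * FT1 u q.2) (P.prod volume) :=
      (integrable_const (1:ℂ)).mul_prod (aux_FT1_int u)
    refine h1.norm.mono' ?_ (Eventually.of_forall fun q => ?_)
    · refine Measurable.aestronglyMeasurable ?_
      have := hu.measurable
      fun_prop
    · rw [norm_mul, aux_norm_exp, norm_mul, norm_one]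
  simp_rw [← aux_inv u]
  unfold FTinv1
  rw [integral_const_mul, integral_integral_swap (f := fun ω y =>
    Complex.exp (Complex.I * ((y * (x + X ω) : ℝ) : ℂ)) * FT1 u y) hint]
  congr 1
  refine integral_congr_ae (Eventually.of_forall fun p => ?_)
  simp only
  unfold charFn1
  rw [← integral_const_mul, ← integral_const_mul]
  refine integral_congr_ae (Eventually.of_forall fun ω => ?_)
  simp only
  rw [mul_comm (FT1 u p), ← mul_assoc, ← Complex.exp_add]
  congr 2
  push_cast
  ring

lemma aux_kt_ind (k : ℝ → ℝ → ℝ) (β : ℝ)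
    (hhom : ∀ t : ℝ, 0 < t → ∀ s ∈ Set.Ioo (0:ℝ) 1, k t (t * s) = t ^ (β - 1) * k 1 s)
    (t : ℝ) (ht : 0 < t) (f : ℝ → ℝ) (s : ℝ) :
    (Set.Ioo 0 t).indicator (fun s => k t s * f s) s =
    t ^ (β - 1) * (Set.Ioo 0 1).indicator (fun r => k 1 r * f (t * r)) (s / t) := by
  by_cases hs : s ∈ Set.Ioo 0 t
  · have hs' : s / t ∈ Set.Ioo (0:ℝ) 1 := ⟨div_pos hs.1 ht, (div_lt_one ht).2 hs.2⟩
    rw [Set.indicator_of_mem hs, Set.indicator_of_mem hs', ← mul_assoc, ← hhom t ht _ hs',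
      mul_div_cancel₀ _ ht.ne']
  · have hs' : s / t ∉ Set.Ioo (0:ℝ) 1 := by
      rintro ⟨h1, h2⟩
      exact hs ⟨by simpa [ht] using (div_pos_iff_of_pos_right ht).1 h1, (div_lt_one ht).1 h2⟩
    rw [Set.indicator_of_notMem hs, Set.indicator_of_notMem hs', mul_zero]

lemma aux_kt_int (k : ℝ → ℝ → ℝ) (β : ℝ) (hk : IntegrableOn (k 1) (Set.Ioc 0 1))
    (hhom : ∀ t : ℝ, 0 < t → ∀ s ∈ Set.Ioo (0:ℝ) 1, k t (t * s) = t ^ (β - 1) * k 1 s)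
    (t : ℝ) (ht : 0 < t) : IntegrableOn (k t) (Set.Ioc 0 t) := by
  rw [integrableOn_Ioc_iff_integrableOn_Ioo] at hk ⊢
  rw [← integrable_indicator_iff measurableSet_Ioo] at hk ⊢
  refine ((hk.comp_div ht.ne').const_mul (t ^ (β - 1))).congr (Eventually.of_forall fun s => ?_)
  have := aux_kt_ind k β hhom t ht (fun _ => 1) s
  simp only [mul_one] at this
  exact this.symm

lemma aux_kt_moment (k : ℝ → ℝ → ℝ) (β : ℝ)
    (hhom : ∀ t : ℝ, 0 < t → ∀ s ∈ Set.Ioo (0:ℝ) 1, k t (t * s) = t ^ (β - 1) * k 1 s)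
    (t : ℝ) (ht : 0 < t) (n : ℕ) :
    ∫ s in Set.Ioc (0:ℝ) t, k t s * s ^ (β * (n : ℝ)) =
      (t ^ β) ^ (n + 1) * ∫ s in Set.Ioc (0:ℝ) 1, k 1 s * s ^ (β * (n : ℝ)) := by
  rw [integral_Ioc_eq_integral_Ioo, integral_Ioc_eq_integral_Ioo,
    ← integral_indicator measurableSet_Ioo]
  simp_rw [aux_kt_ind k β hhom t ht (fun s => s ^ (β * (n : ℝ)))]
  rw [integral_const_mul, Measure.integral_comp_div, integral_indicator measurableSet_Ioo,
    abs_of_pos ht, smul_eq_mul, ← mul_assoc]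
  have : ∫ s in Set.Ioo (0:ℝ) 1, k 1 s * (t * s) ^ (β * (n : ℝ)) =
      (t ^ β) ^ n * ∫ s in Set.Ioo (0:ℝ) 1, k 1 s * s ^ (β * (n : ℝ)) := by
    rw [← integral_const_mul]
    refine setIntegral_congr_fun measurableSet_Ioo fun s hs => ?_
    rw [Real.mul_rpow ht.le hs.1.le, Real.rpow_mul ht.le, Real.rpow_natCast]
    ring
  rw [this, ← mul_assoc, pow_succ']
  congr 2
  rw [Real.rpow_sub_one ht.ne']
  field_simp

lemma aux_volterra (k : ℝ → ℝ → ℝ) (β : ℝ) (hβ0 : 0 < β)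
    (hk : IntegrableOn (k 1) (Set.Ioc 0 1))
    (hhom : ∀ t : ℝ, 0 < t → ∀ s ∈ Set.Ioo (0:ℝ) 1, k t (t * s) = t ^ (β - 1) * k 1 s)
    (t : ℝ) (ht : 0 < t) (z : ℂ) :
    PhiHatC k β (-((t ^ β : ℝ) : ℂ) * z) =
      1 + ∫ s in Set.Ioc (0:ℝ) t, (k t s : ℂ) * (-z * PhiHatC k β (-((s ^ β : ℝ) : ℂ) * z)) := by
  have hkt := aux_kt_int k β hk hhom t ht
  set F : ℕ → ℝ → ℂ := fun n s =>
    ((chat k β n : ℂ) * (-z) ^ (n + 1)) * ((k t s * s ^ (β * (n : ℝ)) : ℝ) : ℂ) with hF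
  have hb : ∀ n : ℕ, ∀ s ∈ Set.Ioc (0:ℝ) t, s ^ (β * (n : ℝ)) ≤ (t ^ β) ^ n := by
    intro n s hs
    rw [← Real.rpow_natCast, ← Real.rpow_mul ht.le]
    exact Real.rpow_le_rpow hs.1.le hs.2 (by positivity)
  have hki : ∀ n : ℕ, IntegrableOn (fun s => k t s * s ^ (β * (n : ℝ))) (Set.Ioc 0 t) := by
    intro n
    refine (hkt.norm.mul_const ((t ^ β) ^ n)).mono'
      (hkt.aestronglyMeasurable.mul (by fun_prop)) ?_
    refine (ae_restrict_iff' measurableSet_Ioc).2 (Eventually.of_forall fun s hs => ?_)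
    rw [norm_mul, Real.norm_eq_abs (s ^ _), abs_of_nonneg (Real.rpow_nonneg hs.1.le _)]
    gcongr
    exact hb n s hs
  have hFi : ∀ n, Integrable (F n) (volume.restrict (Set.Ioc 0 t)) := fun n =>
    ((hki n).ofReal).const_mul _
  have hFint : ∀ n, ∫ s in Set.Ioc (0:ℝ) t, F n s =
      (chat k β (n + 1) : ℂ) * (-((t ^ β : ℝ) : ℂ) * z) ^ (n + 1) := by
    intro n
    simp only [hF]
    rw [integral_const_mul, integral_complex_ofReal, aux_kt_moment k β hhom t ht, chat]
    push_cast
    rw [show -((t ^ β : ℝ) : ℂ) * z = ((t ^ β : ℝ) : ℂ) * (-z) by ring, mul_pow]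
    ring
  have hFn : Summable fun n => ∫ s in Set.Ioc (0:ℝ) t, ‖F n s‖ := by
    have hs := (aux_summable k β hβ0 hk (‖z‖ * t ^ β) (by positivity)).mul_right
      (‖z‖ * ∫ s in Set.Ioc (0:ℝ) t, ‖k t s‖)
    refine Summable.of_nonneg_of_le (fun n => integral_nonneg fun s => norm_nonneg _)
      (fun n => ?_) hs
    rw [← integral_const_mul, ← integral_const_mul]
    refine setIntegral_mono_on (hFi n).norm ((hkt.norm.const_mul _).const_mul _)
      measurableSet_Ioc fun s hs => ?_
    simp only [hF]
    rw [norm_mul, norm_mul, norm_pow, norm_neg, Complex.norm_real, Complex.norm_real, norm_mul,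
      Real.norm_eq_abs (s ^ _), abs_of_nonneg (Real.rpow_nonneg hs.1.le _), Real.norm_eq_abs (chat k β n)]
    calc _ ≤ |chat k β n| * ‖z‖ ^ (n + 1) * (‖k t s‖ * (t ^ β) ^ n) := by
          gcongr
          exact hb n s hs
      _ = _ := by rw [mul_pow]; ring
  have hsum := hasSum_integral_of_summable_integral_norm hFi hFn
  have e1 : ∫ s in Set.Ioc (0:ℝ) t, (k t s : ℂ) * (-z * PhiHatC k β (-((s ^ β : ℝ) : ℂ) * z)) =
      ∫ s in Set.Ioc (0:ℝ) t, ∑' n, F n s := by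
    refine setIntegral_congr_fun measurableSet_Ioc fun s hs => ?_
    simp only [hF, PhiHatC]
    rw [← mul_assoc, ← tsum_mul_left]
    refine tsum_congr fun n => ?_
    rw [show -((s ^ β : ℝ) : ℂ) * z = ((s ^ β : ℝ) : ℂ) * (-z) by ring, mul_pow,
      Real.rpow_mul hs.1.le, Real.rpow_natCast]
    push_cast
    ring
  rw [e1, ← hsum.tsum_eq]
  simp_rw [hFint]
  unfold PhiHatC
  rw [(aux_summableC k β hβ0 hk _).tsum_eq_zero_add]
  simp [chat]

theorem stmt19 (k : ℝ → ℝ → ℝ) (β : ℝ) (hβ0 : 0 < β) (hβ2 : β < 2) (hβ1 : β ≠ 1)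
    (hkm : Measurable (Function.uncurry k))
    (hhom : ∀ t : ℝ, 0 < t → ∀ s ∈ Set.Ioo (0:ℝ) 1, k t (t * s) = t ^ (β - 1) * k 1 s)
    (ε : ℝ) (hε : 0 < ε)
    (hkL : MeasureTheory.IntegrableOn (fun s => |k 1 s| ^ (1 + ε)) (Set.Ioo 0 1))
    (hCM : CMon (fun x => PhiHatR k β (-x)))
    (δ ρ : ℝ) (hδ1 : β < δ) (hδ2 : δ ≤ 2) (hδ3 : δ ≠ 1) (hρ1 : -1 ≤ ρ) (hρ2 : ρ ≤ 1)
    {Ω : Type*} [MeasurableSpace Ω] (P : Measure Ω) [IsProbabilityMeasure P]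
    (A : Ω → ℝ) (hAm : Measurable A) (hA0 : ∀ ω, 0 ≤ A ω)
    (hALap : ∀ l : ℝ, 0 < l → (∫ ω, Real.exp (-(l * A ω)) ∂P) = PhiHatR k β (-l))
    (Y : ℝ → Ω → ℝ) (hYm : Measurable (Function.uncurry Y))
    (hYchar : ∀ t : ℝ, 0 ≤ t → ∀ p : ℝ,
      charFn1 P (Y t) p = Complex.exp (-((t ^ β : ℝ) : ℂ) * psiStable δ ρ p))
    (hInd : ProbabilityTheory.Indep
      (⨆ t : ℝ, MeasurableSpace.comap (Y t) inferInstance)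
      (MeasurableSpace.comap A inferInstance) P) :
    (∀ p : ℝ, ∀ t : ℝ, 0 ≤ t →
      charFn1 P (fun ω => A ω ^ (1 / δ) * Y t ω) p =
        PhiHatC k β (-((t ^ β : ℝ) : ℂ) * psiStable δ ρ p)) ∧
    ProvidesSol1 P (fun t ω => A ω ^ (1 / δ) * Y t ω) k (psiStable δ ρ) := by
  have hδ : 0 < δ := hβ0.trans hδ1
  have hk := aux_k1_int k hkm ε hε hkL
  have hYt : ∀ t, Measurable (Y t) := fun t => hYm.comp measurable_prodMk_left
  have hXm : ∀ t, Measurable (fun ω => A ω ^ (1 / δ) * Y t ω) := fun t => by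
    have := hYt t
    fun_prop
  have hchar : ∀ p : ℝ, ∀ t : ℝ, 0 ≤ t →
      charFn1 P (fun ω => A ω ^ (1 / δ) * Y t ω) p =
        PhiHatC k β (-((t ^ β : ℝ) : ℂ) * psiStable δ ρ p) := by
    intro p t ht
    refine aux_char k β hβ0 hk δ ρ hδ P A hAm hA0 hALap (Y t) (hYt t) (t ^ β) (by positivity)
      (hYchar t ht) ?_ p
    have h1 : ProbabilityTheory.Indep (MeasurableSpace.comap (Y t) inferInstance)
        (MeasurableSpace.comap A inferInstance) P :=
      ProbabilityTheory.indep_of_indep_of_le_left hInd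
        (le_iSup (fun t : ℝ => MeasurableSpace.comap (Y t) inferInstance) t)
    exact ((ProbabilityTheory.IndepFun_iff_Indep (Y t) A P).2 h1).symm
  have hcont : Continuous (PhiHatC k β) := (aux_diff k β hβ0 hk).continuous
  have hψm := aux_psi_meas δ ρ
  have hnorm : ∀ p : ℝ, ∀ t : ℝ, 0 ≤ t →
      ‖PhiHatC k β (-((t ^ β : ℝ) : ℂ) * psiStable δ ρ p)‖ ≤ 1 := by
    intro p t ht
    rw [← hchar p t ht]
    exact aux_char_norm P _ p
  refine ⟨hchar, fun u => ?_⟩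
  have hFT : ∀ t : ℝ, 0 ≤ t → ∀ p,
      FT1 (fun y => ∫ ω, u (y + A ω ^ (1 / δ) * Y t ω) ∂P) p =
        FT1 u p * PhiHatC k β (-((t ^ β : ℝ) : ℂ) * psiStable δ ρ p) := by
    intro t ht p
    rw [aux_FT1_u P _ (hXm t) u p, hchar p t ht]
  have hU : ∀ t : ℝ, 0 ≤ t → ∀ x,
      (∫ ω, u (x + A ω ^ (1 / δ) * Y t ω) ∂P) =
        FTinv1 (fun p => FT1 u p * PhiHatC k β (-((t ^ β : ℝ) : ℂ) * psiStable δ ρ p)) x := by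
    intro t ht x
    rw [aux_u_eq P _ (hXm t) u x]
    congr 1
    funext p
    rw [hchar p t ht]
  have hFm : Measurable (FT1 u) := (aux_FT1_cont u).measurable
  have hFi := aux_FT1_int u
  have hψi := aux_psi_FT1_int δ ρ hδ hδ2 u
  have hΦm : ∀ t : ℝ, Measurable fun p => PhiHatC k β (-((t ^ β : ℝ) : ℂ) * psiStable δ ρ p) :=
    fun t => hcont.measurable.comp (by fun_prop)
  refine ⟨fun s hs => ?_, fun t ht x => ?_, fun x => ?_⟩
  · simp_rw [hFT s hs]
    refine hψi.norm.mono' ?_ (Eventually.of_forall fun p => ?_)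
    · have := hΦm s
      exact Measurable.aestronglyMeasurable (by fun_prop)
    · rw [← mul_assoc, norm_mul]
      exact mul_le_of_le_one_right (norm_nonneg _) (hnorm p s hs)
  · have hkt := aux_kt_int k β hk hhom t ht
    rw [hU t ht.le x]
    have e1 : ∫ s in Set.Ioc (0:ℝ) t,
          (k t s : ℂ) * Lop1 (psiStable δ ρ)
            (fun y => ∫ ω, u (y + A ω ^ (1 / δ) * Y s ω) ∂P) x =
        ∫ s in Set.Ioc (0:ℝ) t, (((2 * Real.pi) ^ (-(1 : ℝ) / 2) : ℝ) : ℂ) * ∫ p : ℝ,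
          Complex.exp (Complex.I * ((p * x : ℝ) : ℂ)) * FT1 u p *
          ((k t s : ℂ) * (-psiStable δ ρ p *
            PhiHatC k β (-((|s| ^ β : ℝ) : ℂ) * psiStable δ ρ p))) := by
      refine setIntegral_congr_fun measurableSet_Ioc fun s hs => ?_
      simp only [Lop1, FTinv1]
      simp_rw [hFT s hs.1.le]
      rw [abs_of_pos hs.1, mul_left_comm, ← integral_const_mul]
      congr 1
      refine integral_congr_ae (Eventually.of_forall fun p => ?_)
      simp only
      ring
    have hint : Integrable (fun q : ℝ × ℝ =>
        Complex.exp (Complex.I * ((q.2 * x : ℝ) : ℂ)) * FT1 u q.2 *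
          ((k t q.1 : ℂ) * (-psiStable δ ρ q.2 *
            PhiHatC k β (-((|q.1| ^ β : ℝ) : ℂ) * psiStable δ ρ q.2))))
        ((volume.restrict (Set.Ioc 0 t)).prod volume) := by
      have h1 := (hkt.norm).mul_prod hψi.norm
      refine h1.mono' ?_ (Eventually.of_forall fun q => ?_)
      · have h2 : Measurable (k t) := hkm.comp measurable_prodMk_left
        have h3 : Measurable fun q : ℝ × ℝ =>
            PhiHatC k β (-((|q.1| ^ β : ℝ) : ℂ) * psiStable δ ρ q.2) :=
          hcont.measurable.comp (by fun_prop)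
        exact Measurable.aestronglyMeasurable (by fun_prop)
      · have h4 := hnorm q.2 |q.1| (abs_nonneg _)
        simp only [norm_mul, aux_norm_exp, norm_neg, one_mul, Complex.norm_real] at h4 ⊢
        have h5 : 0 ≤ ‖FT1 u q.2‖ * ‖k t q.1‖ * ‖psiStable δ ρ q.2‖ := by positivity
        have h6 := mul_le_of_le_one_right h5 h4
        linarith
    rw [e1, integral_const_mul, integral_integral_swap (f := fun s p =>
        Complex.exp (Complex.I * ((p * x : ℝ) : ℂ)) * FT1 u p *
          ((k t s : ℂ) * (-psiStable δ ρ p *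
            PhiHatC k β (-((|s| ^ β : ℝ) : ℂ) * psiStable δ ρ p)))) hint]
    have e2 : ∀ p : ℝ, ∫ s in Set.Ioc (0:ℝ) t,
        Complex.exp (Complex.I * ((p * x : ℝ) : ℂ)) * FT1 u p *
          ((k t s : ℂ) * (-psiStable δ ρ p *
            PhiHatC k β (-((|s| ^ β : ℝ) : ℂ) * psiStable δ ρ p))) =
        Complex.exp (Complex.I * ((p * x : ℝ) : ℂ)) *
          (FT1 u p * PhiHatC k β (-((t ^ β : ℝ) : ℂ) * psiStable δ ρ p)) -
        Complex.exp (Complex.I * ((p * x : ℝ) : ℂ)) * FT1 u p := by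
      intro p
      rw [integral_const_mul, aux_volterra k β hβ0 hk hhom t ht]
      have : ∫ s in Set.Ioc (0:ℝ) t, ((k t s : ℂ) * (-psiStable δ ρ p *
            PhiHatC k β (-((|s| ^ β : ℝ) : ℂ) * psiStable δ ρ p))) =
          ∫ s in Set.Ioc (0:ℝ) t, ((k t s : ℂ) * (-psiStable δ ρ p *
            PhiHatC k β (-((s ^ β : ℝ) : ℂ) * psiStable δ ρ p))) :=
        setIntegral_congr_fun measurableSet_Ioc fun s hs => by
          simp only [abs_of_pos hs.1]
      rw [this]
      ring
    simp_rw [e2]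
    have i1 : Integrable fun p => Complex.exp (Complex.I * ((p * x : ℝ) : ℂ)) * FT1 u p := by
      refine hFi.norm.mono' (Measurable.aestronglyMeasurable (by fun_prop))
        (Eventually.of_forall fun p => ?_)
      rw [norm_mul, aux_norm_exp, one_mul]
    have i2 : Integrable fun p => Complex.exp (Complex.I * ((p * x : ℝ) : ℂ)) *
          (FT1 u p * PhiHatC k β (-((t ^ β : ℝ) : ℂ) * psiStable δ ρ p)) := by
      have := hΦm t
      refine hFi.norm.mono' (Measurable.aestronglyMeasurable (by fun_prop))
        (Eventually.of_forall fun p => ?_)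
      rw [norm_mul, aux_norm_exp, one_mul, norm_mul]
      exact mul_le_of_le_one_right (norm_nonneg _) (hnorm p t ht.le)
    rw [integral_sub i2 i1]
    have e3 := aux_inv u x
    unfold FTinv1 at e3 ⊢
    rw [mul_sub, e3]
    ring
  · have hlim : Tendsto (fun t : ℝ => FTinv1 (fun p => FT1 u p *
        PhiHatC k β (-((t ^ β : ℝ) : ℂ) * psiStable δ ρ p)) x)
        (nhdsWithin 0 (Set.Ioi 0)) (nhds (FTinv1 (FT1 u) x)) := by
      unfold FTinv1
      refine Tendsto.const_mul _ ?_
      refine tendsto_integral_filter_of_dominated_convergence (fun p => ‖FT1 u p‖) ?_ ?_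
        hFi.norm ?_
      · refine Eventually.of_forall fun t => ?_
        have := hΦm t
        exact Measurable.aestronglyMeasurable (by fun_prop)
      · filter_upwards [self_mem_nhdsWithin] with t ht
        refine Eventually.of_forall fun p => ?_
        rw [norm_mul, aux_norm_exp, one_mul, norm_mul]
        exact mul_le_of_le_one_right (norm_nonneg _) (hnorm p t (le_of_lt ht))
      · refine Eventually.of_forall fun p => ?_
        have hc : Continuous fun t : ℝ => Complex.exp (Complex.I * ((p * x : ℝ) : ℂ)) *
            (FT1 u p * PhiHatC k β (-((t ^ β : ℝ) : ℂ) * psiStable δ ρ p)) := by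
          have : Continuous fun t : ℝ => t ^ β := Real.continuous_rpow_const hβ0.le
          fun_prop
        have h := (hc.tendsto 0).mono_left (nhdsWithin_le_nhds (s := Set.Ioi 0))
        simpa only [Real.zero_rpow hβ0.ne', Complex.ofReal_zero, neg_zero, zero_mul, aux_zero,
          mul_one] using h
    rw [aux_inv] at hlim
    refine hlim.congr' ?_
    filter_upwards [self_mem_nhdsWithin] with t ht
    exact (hU t (le_of_lt ht) x).symm
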